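/- (Grinshpan–Kaliuzhnyi-Verbovetskyi–Vinnikov–Woerdeman) Let λ₁,…,λ_N be points of 𝔻^d and let w₁,…,w_N ∈ ℂ. If there exists an analytic function φ : 𝔻^d → ℂ with sup_{𝔻^d}|φ| ≤ 1 and φ(λ_i) = w_i for i = 1,…,N, then for every pair of indices 1 ≤ p < q ≤ d there exist positive semi-definite N×N matrices Γ^p and Γ^q such that for all i,j: 1 − w_i w̄_j = ∏_{r ≠ q} (1 − λ_i^r λ̄_j^r) Γ^q_{ij} + ∏_{r ≠ p} (1 − λ_i^r λ̄_j^r) Γ^p_{ij}. -/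

import Mathlib

open Matrix Finset
open scoped ComplexOrder

/-- The open polydisk `𝔻^d` in `ℂ^d`. -/
def Polydisk (d : ℕ) : Set (Fin d → ℂ) := {lam | ∀ r, ‖lam r‖ < 1}

/-!
First let `φ` be a polynomial `f` of modulus less than one on the closed polydisk. On the subspace
of `L²(𝕋^d)` spanned by the Fourier modes `n` with `0 ≤ n p`, let `T` be multiplication by `f` and
let `P` be the projection onto the Hardy space. The form of `1 - (P T*)* (P T*)` on the Hardy space
is the sum of a form `A` and a form `B`: the value of `A` at `k` is the minimum of
`‖x‖² - ‖T* x‖²` over the `x` with `P x = k`, and that of `B` is the maximum of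
`‖(1 - P) T* x‖² - ‖(1 - P) x‖²` over the same fibre. The adjoints of the coordinate
multiplications commute with `T*`. Since that of `z_q` is unitary and preserves the kernel of `P`,
its compression to the Hardy space decreases the minimum; since `z_p` maps both the Hardy space and
its complement into themselves, the adjoint of `z_p` decreases the maximum. On Szegő kernels `k_i`
these adjoints act by the scalars conjugate to `λ_i^q` and `λ_i^p`, so `(1 - λ_i^q λ̄_j^q) A_ij` and
`(1 - λ_i^p λ̄_j^p) B_ij` are positive semidefinite; multiplying `A_ij + B_ij` by the reciprocal
`∏ r, (1 - λ_i^r λ̄_j^r)` of the Szegő kernel gives the required identity.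

A general `φ` is approximated by polynomials, applying Cauchy's formula in one variable at a time to
its dilates, and the matrices pass to the limit because the identity bounds their diagonals.
-/

namespace GKVW

open ContinuousLinearMap RCLike
open scoped ComplexConjugate InnerProduct InnerProductSpace

section Operators

variable {𝕜 E : Type*} [RCLike 𝕜] [NormedAddCommGroup E] [InnerProductSpace 𝕜 E]

theorem posSemidef_inner_of_isPositive {n : Type*} {B : E →L[𝕜] E} (hB : B.IsPositive)
    (k : n → E) : (Matrix.of fun i j ↦ ⟪k i, B (k j)⟫_𝕜).PosSemidef := by
  refine ⟨?_, fun x ↦ ?_⟩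
  · ext i j
    simp [Matrix.conjTranspose_apply, hB.isSymmetric.apply_clm]
  · convert hB.inner_nonneg_right (x.sum fun i c ↦ c • k i) using 1
    simp only [Finsupp.sum, map_sum, map_smul, sum_inner, inner_sum, inner_smul_left,
      inner_smul_right, Finset.mul_sum]
    rw [Finset.sum_comm]
    simp [mul_left_comm, mul_comm]

variable (K : Submodule 𝕜 E) [K.HasOrthogonalProjection]

theorem norm_sq_sub_norm_sq_add {S : E →L[𝕜] E} (hS : ∀ x ∈ Kᗮ, S x ∈ Kᗮ) (x : E) :
    (‖x‖ ^ 2 - ‖S x‖ ^ 2) + (‖Kᗮ.starProjection (S x)‖ ^ 2 - ‖Kᗮ.starProjection x‖ ^ 2) =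
      ‖K.starProjection x‖ ^ 2 - ‖K.starProjection (S (K.starProjection x))‖ ^ 2 := by
  have hPS : K.starProjection (S x) = K.starProjection (S (K.starProjection x)) := by
    conv_lhs => rw [← K.starProjection_add_starProjection_orthogonal x, map_add, map_add,
      K.starProjection_apply_eq_zero_iff.2 (hS _ (Kᗮ.starProjection_apply_mem x)), add_zero]
  rw [← hPS]
  linarith [K.norm_sq_eq_add_norm_sq_starProjection (𝕜 := 𝕜) x,
    K.norm_sq_eq_add_norm_sq_starProjection (𝕜 := 𝕜) (S x)]

variable {K}

theorem starProjection_orthogonal_apply_map {V : E →L[𝕜] E} (hV : ∀ x ∈ K, V x ∈ K)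
    (hV' : ∀ x ∈ Kᗮ, V x ∈ Kᗮ) (x : E) :
    Kᗮ.starProjection (V x) = V (Kᗮ.starProjection x) := by
  refine Submodule.eq_starProjection_of_mem_orthogonal (hV' _ (Kᗮ.starProjection_apply_mem x))
    (K.le_orthogonal_orthogonal ?_)
  rw [← map_sub, K.starProjection_orthogonal_val, sub_sub_cancel]
  exact hV _ (K.starProjection_apply_mem x)

theorem re_inner_le_of_isLeast {S A U : E →L[𝕜] E}
    (hA : ∀ k ∈ K, IsLeast ((fun x ↦ ‖x‖ ^ 2 - ‖S x‖ ^ 2) '' {x | K.starProjection x = k})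
      (re ⟪k, A k⟫_𝕜))
    (hU : ∀ x, ‖U x‖ = ‖x‖) (hUK : ∀ x ∈ Kᗮ, U x ∈ Kᗮ) (hUS : Commute U S)
    {k : E} (hk : k ∈ K) :
    re ⟪K.starProjection (U k), A (K.starProjection (U k))⟫_𝕜 ≤ re ⟪k, A k⟫_𝕜 := by
  obtain ⟨x, rfl, hx⟩ := (hA k hk).1
  rw [← hx]
  refine (hA _ (K.starProjection_apply_mem _)).2 ⟨U x, ?_, ?_⟩
  · change K.starProjection (U x) = _
    rw [← sub_eq_zero, ← map_sub, ← map_sub, K.starProjection_apply_eq_zero_iff]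
    exact hUK _ (K.sub_starProjection_mem_orthogonal x)
  · have : S (U x) = U (S x) := congr($hUS.eq.symm x)
    simp only [this, hU]

variable [CompleteSpace E]

-- Completing the square: the maximum is attained at `e = D† (1 - D D†)⁻¹ w`.
theorem exists_isGreatest_norm_add_sq_sub {D : E →L[𝕜] E} (hD : ‖D‖ < 1) :
    ∃ R : E →L[𝕜] E, IsSelfAdjoint R ∧
      ∀ w, IsGreatest (Set.range fun e ↦ ‖w + D e‖ ^ 2 - ‖e‖ ^ 2) (re ⟪w, R w⟫_𝕜) := by
  have hDD : ‖D * D†‖ < 1 := by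
    refine (norm_mul_le _ _).trans_lt ?_
    rw [LinearIsometryEquiv.norm_map]
    nlinarith [norm_nonneg D]
  refine ⟨Ring.inverse (1 - D * D†), ((IsSelfAdjoint.one _).sub (.mul_star_self D)).ringInverse,
    fun w ↦ ?_⟩
  set r := Ring.inverse (1 - D * D†) w
  have hw : r - D ((D†) r) = w :=
    congr($(Ring.mul_inverse_cancel _ (isUnit_one_sub_of_norm_lt_one hDD)) w)
  have value (e : E) : ‖w + D ((D†) r + e)‖ ^ 2 - ‖(D†) r + e‖ ^ 2
      = re ⟪w, r⟫_𝕜 + (‖D e‖ ^ 2 - ‖e‖ ^ 2) := by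
    have h₁ : w + D ((D†) r + e) = r + D e := by rw [map_add, ← hw]; abel
    have h₂ : re ⟪w, r⟫_𝕜 = ‖r‖ ^ 2 - ‖(D†) r‖ ^ 2 := by
      rw [← inner_self_eq_norm_sq (𝕜 := 𝕜), ← inner_self_eq_norm_sq (𝕜 := 𝕜),
        adjoint_inner_right, ← map_sub, ← inner_sub_left, hw]
    rw [h₁, h₂, norm_add_sq (𝕜 := 𝕜), norm_add_sq (𝕜 := 𝕜), adjoint_inner_left]
    ring
  refine ⟨⟨(D†) r, by simpa using value 0⟩, ?_⟩
  rintro _ ⟨e, rfl⟩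
  have hle : ‖D (e - (D†) r)‖ ≤ ‖e - (D†) r‖ := by
    simpa using D.le_of_opNorm_le hD.le (e - (D†) r)
  have := value (e - (D†) r)
  rw [add_sub_cancel] at this
  simp only [this]
  linarith [pow_le_pow_left₀ (norm_nonneg _) hle 2]

variable (K)

theorem exists_isGreatest_norm_sq_sub {S : E →L[𝕜] E} (hS : ‖S‖ < 1) :
    ∃ A : E →L[𝕜] E, IsSelfAdjoint A ∧ ∀ k ∈ K,
      IsGreatest ((fun x ↦ ‖Kᗮ.starProjection (S x)‖ ^ 2 - ‖Kᗮ.starProjection x‖ ^ 2) ''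
        {x | K.starProjection x = k}) (re ⟪k, A k⟫_𝕜) := by
  set Q := Kᗮ.starProjection
  have hQ (x : E) : ‖Q x‖ ≤ ‖x‖ := Kᗮ.norm_starProjection_apply_le x
  have hQQ (x : E) : Q (Q x) = Q x :=
    Submodule.starProjection_eq_self_iff.2 (Kᗮ.starProjection_apply_mem x)
  have hD : ‖Q * S * Q‖ < 1 := by
    refine lt_of_le_of_lt (opNorm_le_bound _ (norm_nonneg S) fun x ↦ ?_) hS
    exact (hQ _).trans ((S.le_opNorm _).trans (by gcongr; exact hQ x))
  obtain ⟨R, hR, hmax⟩ := exists_isGreatest_norm_add_sq_sub hD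
  refine ⟨star (Q * S) * R * (Q * S), hR.conjugate' _, fun k hk ↦ ?_⟩
  have hval : re ⟪k, (star (Q * S) * R * (Q * S)) k⟫_𝕜 = re ⟪Q (S k), R (Q (S k))⟫_𝕜 :=
    congr(re $(adjoint_inner_right (Q * S) k (R (Q (S k)))))
  have fiber {x : E} (hx : K.starProjection x = k) :
      Q (S k) + (Q * S * Q) (Q x) = Q (S x) := by
    change Q (S k) + Q (S (Q (Q x))) = _
    rw [hQQ, ← map_add, ← map_add, ← hx, K.starProjection_add_starProjection_orthogonal]
  rw [hval]
  obtain ⟨⟨e, he⟩, hle⟩ := hmax (Q (S k))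
  constructor
  · have hPx : K.starProjection (k + Q e) = k := by
      rw [map_add, Submodule.starProjection_eq_self_iff.2 hk, add_eq_left]
      exact K.starProjection_apply_eq_zero_iff.2 (Kᗮ.starProjection_apply_mem e)
    have hQx : Q (k + Q e) = Q e := by
      rw [map_add, hQQ, K.starProjection_orthogonal_apply_eq_zero hk, zero_add]
    have hDe : (Q * S * Q) (Q e) = (Q * S * Q) e := congr(Q (S $(hQQ e)))
    refine ⟨k + Q e, hPx, le_antisymm (hle ⟨Q e, ?_⟩) ?_⟩
    · simp only [← fiber hPx, hQx]
    · simp only [← fiber hPx, hQx, ← he, hDe]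
      gcongr
      exact hQ e
  · rintro _ ⟨x, hx, rfl⟩
    exact hle ⟨Q x, by simp only [fiber hx]⟩

-- The sum of the two functionals of `x` below depends only on `K.starProjection x`, so the minimum
-- of one is complementary to the maximum of the other.
theorem exists_defect_splitting {S : E →L[𝕜] E} (hS : ‖S‖ < 1) (hSK : ∀ x ∈ Kᗮ, S x ∈ Kᗮ) :
    ∃ A B : E →L[𝕜] E, IsSelfAdjoint A ∧ IsSelfAdjoint B ∧
      A + B = 1 - (K.starProjection * S)† * (K.starProjection * S) ∧
      (∀ k ∈ K, IsLeast ((fun x ↦ ‖x‖ ^ 2 - ‖S x‖ ^ 2) '' {x | K.starProjection x = k})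
        (re ⟪k, A k⟫_𝕜)) ∧
      ∀ k ∈ K, IsGreatest
        ((fun x ↦ ‖Kᗮ.starProjection (S x)‖ ^ 2 - ‖Kᗮ.starProjection x‖ ^ 2) ''
          {x | K.starProjection x = k}) (re ⟪k, B k⟫_𝕜) := by
  obtain ⟨B, hB, hmax⟩ := exists_isGreatest_norm_sq_sub K hS
  set PS := K.starProjection * S
  have hA : IsSelfAdjoint (1 - PS† * PS - B) :=
    ((IsSelfAdjoint.one _).sub (.star_mul_self PS)).sub hB
  refine ⟨1 - PS† * PS - B, B, hA, hB, sub_add_cancel _ _, fun k hk ↦ ?_, hmax⟩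
  have hval : re ⟪k, (1 - PS† * PS - B) k⟫_𝕜 =
      ‖k‖ ^ 2 - ‖K.starProjection (S k)‖ ^ 2 - re ⟪k, B k⟫_𝕜 := by
    change re ⟪k, k - (PS†) (PS k) - B k⟫_𝕜 = _
    rw [inner_sub_right, inner_sub_right, adjoint_inner_right, map_sub, map_sub,
      inner_self_eq_norm_sq, inner_self_eq_norm_sq]
    rfl
  have fiber {x : E} (hx : K.starProjection x = k) := hx ▸ norm_sq_sub_norm_sq_add K hSK x
  obtain ⟨⟨x, hx, hxk⟩, hle⟩ := hmax k hk
  constructor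
  · exact ⟨x, hx, by simp only at hxk ⊢; linarith [fiber hx]⟩
  · rintro _ ⟨y, hy, rfl⟩
    simp only
    linarith [fiber hy, hle ⟨y, hy, rfl⟩]

variable {K}

omit [K.HasOrthogonalProjection] in
theorem adjoint_mem_orthogonal {T : E →L[𝕜] E} (hT : ∀ x ∈ K, T x ∈ K) {x : E} (hx : x ∈ Kᗮ) :
    (T†) x ∈ Kᗮ :=
  fun y hy ↦ by rw [adjoint_inner_right, hx _ (hT y hy)]

theorem adjoint_mem {T : E →L[𝕜] E} (hT : ∀ x ∈ Kᗮ, T x ∈ Kᗮ) {x : E} (hx : x ∈ K) :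
    (T†) x ∈ K := by
  rw [← K.orthogonal_orthogonal] at hx ⊢
  exact adjoint_mem_orthogonal hT hx

theorem starProjection_adjoint_eq_smul {T : E →L[𝕜] E} {k : E} (hk : k ∈ K) {c : 𝕜}
    (hc : ∀ x ∈ K, ⟪k, T x⟫_𝕜 = c * ⟪k, x⟫_𝕜) :
    K.starProjection ((T†) k) = starRingEnd 𝕜 c • k := by
  refine Submodule.eq_starProjection_of_mem_of_inner_eq_zero (K.smul_mem _ hk) fun x hx ↦ ?_
  rw [inner_sub_left, adjoint_inner_left, hc x hx, inner_smul_left, RCLike.conj_conj, sub_self]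

theorem posSemidef_one_sub_mul_inner {n : Type*} {B V : E →L[𝕜] E} (hB : IsSelfAdjoint B)
    (hV : ∀ x ∈ K, re ⟪K.starProjection (V x), B (K.starProjection (V x))⟫_𝕜 ≤ re ⟪x, B x⟫_𝕜)
    {k : n → E} (hk : ∀ i, k i ∈ K) {c : n → 𝕜}
    (hc : ∀ i, K.starProjection (V (k i)) = starRingEnd 𝕜 (c i) • k i) :
    (Matrix.of fun i j ↦ (1 - c i * starRingEnd 𝕜 (c j)) * ⟪k i, B (k j)⟫_𝕜).PosSemidef := by
  set P := K.starProjection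
  have hform (x y : E) : ⟪x, (P† * (B - (P * V)† * B * (P * V)) * P) y⟫_𝕜 =
      ⟪P x, B (P y)⟫_𝕜 - ⟪P (V (P x)), B (P (V (P y)))⟫_𝕜 := by
    change ⟪x, (P†) (B (P y) - ((P * V)†) (B ((P * V) (P y))))⟫_𝕜 = _
    rw [adjoint_inner_right, inner_sub_right, adjoint_inner_right]
    rfl
  have hpos : (P† * (B - (P * V)† * B * (P * V)) * P).IsPositive := by
    refine isPositive_def.2 ⟨isSelfAdjoint_iff_isSymmetric.1 ?_, fun x ↦ ?_⟩
    · exact (hB.sub (hB.conjugate' _)).conjugate' _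
    · rw [reApplyInnerSelf_apply, inner_re_symm, hform, map_sub, sub_nonneg]
      exact hV _ (K.starProjection_apply_mem x)
  convert posSemidef_inner_of_isPositive hpos k using 4 with i j
  rw [hform, Submodule.starProjection_eq_self_iff.2 (hk i),
    Submodule.starProjection_eq_self_iff.2 (hk j), hc, hc, map_smul, inner_smul_left,
    inner_smul_right, RCLike.conj_conj]
  ring

theorem re_inner_le_of_isGreatest {S B V : E →L[𝕜] E}
    (hB : ∀ k ∈ K, IsGreatest
      ((fun x ↦ ‖Kᗮ.starProjection (S x)‖ ^ 2 - ‖Kᗮ.starProjection x‖ ^ 2) ''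
        {x | K.starProjection x = k}) (re ⟪k, B k⟫_𝕜))
    (hV : ∀ x, ‖V x‖ = ‖x‖) (hVK : ∀ x ∈ K, V x ∈ K) (hVK' : ∀ x ∈ Kᗮ, V x ∈ Kᗮ)
    (hVS : Commute (V†) S) {k : E} (hk : k ∈ K) :
    re ⟪(V†) k, B ((V†) k)⟫_𝕜 ≤ re ⟪k, B k⟫_𝕜 := by
  set Q := Kᗮ.starProjection
  obtain ⟨x, hxk, hx⟩ := (hB _ (adjoint_mem hVK' hk)).1
  have hQx : Q x ∈ Kᗮ := Kᗮ.starProjection_apply_mem x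
  have hV_left (y : E) : (V†) (V y) = y :=
    congr($((norm_map_iff_adjoint_comp_self V).1 hV) y)
  have hy : (V†) (k + V (Q x)) = x := by
    rw [map_add, hV_left, ← hxk, K.starProjection_add_starProjection_orthogonal]
  have hPy : K.starProjection (k + V (Q x)) = k := by
    rw [map_add, Submodule.starProjection_eq_self_iff.2 hk,
      K.starProjection_apply_eq_zero_iff.2 (hVK' _ hQx), add_zero]
  have hQy : Q (k + V (Q x)) = V (Q x) := by
    rw [K.starProjection_orthogonal_val, hPy, add_sub_cancel_left]
  have hQS : Q (S x) = (V†) (Q (S (k + V (Q x)))) := by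
    rw [← starProjection_orthogonal_apply_map (fun _ ↦ adjoint_mem hVK')
      (fun _ ↦ adjoint_mem_orthogonal hVK)]
    nth_rw 1 [← hy]
    exact congr(Q ($hVS.eq.symm (k + V (Q x))))
  have hV_adjoint (y : E) : ‖(V†) y‖ ≤ ‖y‖ := by
    refine (V†).le_of_opNorm_le ?_ y |>.trans_eq (one_mul _)
    rw [LinearIsometryEquiv.norm_map]
    exact opNorm_le_bound _ zero_le_one fun y ↦ by rw [hV, one_mul]
  refine hx.ge.trans (le_trans ?_ ((hB k hk).2 ⟨_, hPy, rfl⟩))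
  simp only [hQS, hQy, hV]
  gcongr
  exact hV_adjoint _

theorem norm_adjoint_apply_of_surjective {Z : E →L[𝕜] E} (hZ : ∀ x, ‖Z x‖ = ‖x‖)
    (hZ' : Function.Surjective Z) (x : E) : ‖(Z†) x‖ = ‖x‖ := by
  obtain ⟨y, rfl⟩ := hZ' x
  rw [hZ, show (Z†) (Z y) = y from congr($((norm_map_iff_adjoint_comp_self Z).1 hZ) y)]

theorem exists_posSemidef_splitting {n : Type*} {T V Z : E →L[𝕜] E}
    (hT : ‖T‖ < 1) (hTK : ∀ x ∈ K, T x ∈ K)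
    (hV : ∀ x, ‖V x‖ = ‖x‖) (hVK : ∀ x ∈ K, V x ∈ K) (hVK' : ∀ x ∈ Kᗮ, V x ∈ Kᗮ)
    (hVT : Commute V T)
    (hZ : ∀ x, ‖Z x‖ = ‖x‖) (hZ' : Function.Surjective Z) (hZK : ∀ x ∈ K, Z x ∈ K)
    (hZT : Commute Z T)
    {k : n → E} (hk : ∀ i, k i ∈ K) {w a b : n → 𝕜}
    (hw : ∀ i, ∀ x ∈ K, ⟪k i, T x⟫_𝕜 = w i * ⟪k i, x⟫_𝕜)
    (ha : ∀ i, ∀ x ∈ K, ⟪k i, V x⟫_𝕜 = a i * ⟪k i, x⟫_𝕜)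
    (hb : ∀ i, ∀ x ∈ K, ⟪k i, Z x⟫_𝕜 = b i * ⟪k i, x⟫_𝕜) :
    ∃ A B : Matrix n n 𝕜,
      (Matrix.of fun i j ↦ (1 - b i * starRingEnd 𝕜 (b j)) * A i j).PosSemidef ∧
      (Matrix.of fun i j ↦ (1 - a i * starRingEnd 𝕜 (a j)) * B i j).PosSemidef ∧
      ∀ i j, A i j + B i j = (1 - w i * starRingEnd 𝕜 (w j)) * ⟪k i, k j⟫_𝕜 := by
  obtain ⟨A, B, hA, hB, hAB, hmin, hmax⟩ := exists_defect_splitting K (S := T†)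
    (by rwa [LinearIsometryEquiv.norm_map]) fun _ ↦ adjoint_mem_orthogonal hTK
  refine ⟨.of fun i j ↦ ⟪k i, A (k j)⟫_𝕜, .of fun i j ↦ ⟪k i, B (k j)⟫_𝕜, ?_, ?_, fun i j ↦ ?_⟩
  · exact posSemidef_one_sub_mul_inner hA
      (fun x hx ↦ re_inner_le_of_isLeast hmin (norm_adjoint_apply_of_surjective hZ hZ')
        (fun _ ↦ adjoint_mem_orthogonal hZK) hZT.star_star hx) hk
      fun i ↦ starProjection_adjoint_eq_smul (hk i) (hb i)
  · refine posSemidef_one_sub_mul_inner hB (fun x hx ↦ ?_) hk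
      fun i ↦ starProjection_adjoint_eq_smul (hk i) (ha i)
    rw [Submodule.starProjection_eq_self_iff.2 (adjoint_mem hVK' hx)]
    exact re_inner_le_of_isGreatest hmax hV hVK hVK' hVT.star_star hx
  · have hPT (i) : (K.starProjection * T†) (k i) = starRingEnd 𝕜 (w i) • k i :=
      starProjection_adjoint_eq_smul (hk i) (hw i)
    simp only [of_apply]
    rw [← inner_add_right, ← _root_.add_apply, hAB]
    change ⟪k i, k j - ((K.starProjection * T†)†) ((K.starProjection * T†) (k j))⟫_𝕜 = _
    rw [inner_sub_right, adjoint_inner_right, hPT, hPT, inner_smul_left, inner_smul_right,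
      RCLike.conj_conj]
    ring

end Operators

section Multiplication

open MeasureTheory

variable {X : Type*} [TopologicalSpace X] [CompactSpace X] [MeasurableSpace X] [BorelSpace X]
  {μ : Measure X} [IsFiniteMeasure μ]

/-- Multiplication by `f` on `L²`; for the star-algebra structure see `mulLp`. -/
noncomputable def mulLpCLM (μ : Measure X) [IsFiniteMeasure μ] (f : C(X, ℂ)) :
    Lp ℂ 2 μ →L[ℂ] Lp ℂ 2 μ :=
  (ContinuousLinearMap.mul ℂ ℂ).holderL μ ⊤ 2 2 (ContinuousMap.toLp ⊤ μ ℂ f)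

theorem coeFn_mulLpCLM (f : C(X, ℂ)) (x : Lp ℂ 2 μ) : mulLpCLM μ f x =ᵐ[μ] fun t ↦ f t * x t := by
  filter_upwards [(ContinuousLinearMap.mul ℂ ℂ).coeFn_holder (r := 2)
    (ContinuousMap.toLp (E := ℂ) ⊤ μ ℂ f) x, ContinuousMap.coeFn_toLp (p := ⊤) (𝕜 := ℂ) μ f]
    with t h₁ h₂
  exact h₁.trans congr($h₂ * _)

theorem mulLpCLM_mul (f g : C(X, ℂ)) : mulLpCLM μ (f * g) = mulLpCLM μ f * mulLpCLM μ g := by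
  ext1 x
  apply Lp.ext
  filter_upwards [coeFn_mulLpCLM (f * g) x, coeFn_mulLpCLM f (mulLpCLM μ g x), coeFn_mulLpCLM g x]
    with t h₁ h₂ h₃
  rw [h₁, mul_apply_eq_comp, h₂, h₃, ContinuousMap.mul_apply, mul_assoc]

theorem mulLpCLM_one : mulLpCLM μ (1 : C(X, ℂ)) = 1 := by
  ext1 x
  apply Lp.ext
  filter_upwards [coeFn_mulLpCLM 1 x] with t ht
  simpa using ht

theorem mulLpCLM_star (f : C(X, ℂ)) : mulLpCLM μ (star f) = star (mulLpCLM μ f) := by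
  rw [star_eq_adjoint, eq_adjoint_iff]
  intro x y
  rw [L2.inner_def, L2.inner_def]
  apply integral_congr_ae
  filter_upwards [coeFn_mulLpCLM (star f) x, coeFn_mulLpCLM f y] with t h₁ h₂
  rw [h₁, h₂]
  simp [RCLike.inner_apply]
  ring

/-- The representation of `C(X, ℂ)` on `L²(X, μ)` by multiplication operators. -/
noncomputable def mulLp (μ : Measure X) [IsFiniteMeasure μ] :
    C(X, ℂ) →⋆ₐ[ℂ] (Lp ℂ 2 μ →L[ℂ] Lp ℂ 2 μ) where
  __ := AlgHom.ofLinearMap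
    { toFun := mulLpCLM μ
      map_add' := fun f g ↦ by simp only [mulLpCLM, map_add]
      map_smul' := fun c f ↦ by simp only [mulLpCLM, map_smul, RingHom.id_apply] }
    mulLpCLM_one mulLpCLM_mul
  map_star' := mulLpCLM_star

theorem coeFn_mulLp (f : C(X, ℂ)) (x : Lp ℂ 2 μ) : mulLp μ f x =ᵐ[μ] fun t ↦ f t * x t :=
  coeFn_mulLpCLM f x

theorem norm_mulLp_le (f : C(X, ℂ)) : ‖mulLp μ f‖ ≤ ‖f‖ := NonUnitalStarAlgHom.norm_apply_le _ f

theorem mulLp_mul_apply (f g : C(X, ℂ)) (x : Lp ℂ 2 μ) :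
    mulLp μ (f * g) x = mulLp μ f (mulLp μ g x) := by
  rw [map_mul]; rfl

theorem inner_mulLp_right (f : C(X, ℂ)) (x y : Lp ℂ 2 μ) :
    ⟪x, mulLp μ f y⟫_ℂ = ⟪mulLp μ (star f) x, y⟫_ℂ := by
  rw [map_star, star_eq_adjoint, adjoint_inner_left]

end Multiplication

section Support

variable {κ 𝕜 E : Type*} [RCLike 𝕜] [NormedAddCommGroup E] [InnerProductSpace 𝕜 E]
  (b : HilbertBasis κ 𝕜 E)

/-- The closed subspace of vectors whose coefficients along `b` vanish outside `T`; being defined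
as an orthogonal complement, it is closed by construction. -/
def supportedSubspace (T : Set κ) : Submodule 𝕜 E := (Submodule.span 𝕜 (b '' Tᶜ))ᗮ

variable {b} {T : Set κ}

instance [CompleteSpace E] : CompleteSpace (supportedSubspace b T) :=
  inferInstanceAs (CompleteSpace (Submodule.span 𝕜 (b '' Tᶜ))ᗮ)

theorem isClosed_supportedSubspace : IsClosed (supportedSubspace b T : Set E) :=
  Submodule.isClosed_orthogonal _

theorem mem_supportedSubspace {x : E} :
    x ∈ supportedSubspace b T ↔ ∀ n ∉ T, ⟪b n, x⟫_𝕜 = 0 := by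
  refine ⟨fun hx n hn ↦ hx _ (Submodule.subset_span ⟨n, hn, rfl⟩), fun hx y hy ↦ ?_⟩
  induction hy using Submodule.span_induction with
  | mem y hy => obtain ⟨n, hn, rfl⟩ := hy; exact hx n hn
  | zero => exact inner_zero_left x
  | add y z _ _ hy hz => rw [inner_add_left, hy, hz, add_zero]
  | smul c y _ hy => rw [inner_smul_left, hy, mul_zero]

theorem basis_mem_supportedSubspace {n : κ} (hn : n ∈ T) : b n ∈ supportedSubspace b T :=
  mem_supportedSubspace.2 fun _ hm ↦ b.orthonormal.inner_eq_zero (ne_of_mem_of_not_mem hn hm).symm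

theorem inner_eq_zero_of_disjoint {T' : Set κ} (hT : Disjoint T T') {x y : E}
    (hx : x ∈ supportedSubspace b T) (hy : y ∈ supportedSubspace b T') : ⟪x, y⟫_𝕜 = 0 := by
  refine (b.hasSum_inner_mul_inner x y).unique ?_
  convert hasSum_zero with n
  by_cases hn : n ∈ T
  · rw [mem_supportedSubspace.1 hy n (hT.notMem_of_mem_left hn), mul_zero]
  · rw [inner_eq_zero_symm.1 (mem_supportedSubspace.1 hx n hn), zero_mul]

end Support

section Invariance

variable {𝕜 E : Type*} [RCLike 𝕜] [NormedAddCommGroup E] [InnerProductSpace 𝕜 E]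
  {K : Submodule 𝕜 E} [K.HasOrthogonalProjection]

theorem mem_of_sub_apply_mem {T : E →L[𝕜] E} (hT : ‖T‖ < 1) (hTK : ∀ x ∈ K, T x ∈ K) {x : E}
    (hx : x - T x ∈ K) : x ∈ K := by
  set Q := Kᗮ.starProjection
  have hQ {y : E} (hy : y ∈ K) : Q y = 0 := K.starProjection_orthogonal_apply_eq_zero hy
  have hQx : Q x = Q (T (Q x)) := by
    have h₁ := hQ hx
    have h₂ := hQ (hTK _ (K.starProjection_apply_mem x))
    rw [map_sub, sub_eq_zero] at h₁
    rw [h₁, ← h₁, K.starProjection_orthogonal_val, map_sub, map_sub, h₂, sub_zero, ← h₁,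
      K.starProjection_orthogonal_val]
  have hle : ‖Q x‖ ≤ ‖T‖ * ‖Q x‖ := by
    conv_lhs => rw [hQx]
    exact (Kᗮ.norm_starProjection_apply_le _).trans (T.le_opNorm _)
  have hQ₀ : Q x = 0 := norm_eq_zero.1 (by nlinarith [norm_nonneg (Q x)])
  rwa [Kᗮ.starProjection_apply_eq_zero_iff, K.orthogonal_orthogonal] at hQ₀

end Invariance

section Torus

open MeasureTheory UnitAddTorus

noncomputable local instance : MeasureSpace UnitAddCircle := ⟨AddCircle.haarAddCircle⟩

local instance : Measure.IsAddHaarMeasure (volume : Measure UnitAddCircle) :=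
  inferInstanceAs (Measure.IsAddHaarMeasure AddCircle.haarAddCircle)

local instance : IsProbabilityMeasure (volume : Measure UnitAddCircle) :=
  inferInstanceAs (IsProbabilityMeasure AddCircle.haarAddCircle)

variable {ι : Type*} [Fintype ι]

/-- `L²` of the torus `𝕋^ι` for normalized Haar measure. -/
noncomputable abbrev TorusL2 (ι : Type*) [Fintype ι] := Lp ℂ 2 (volume : Measure (UnitAddTorus ι))

theorem star_mFourier (n : ι → ℤ) : star (mFourier n) = mFourier (-n) := by
  ext t
  exact mFourier_neg.symm

theorem star_mFourier_mul_self (n : ι → ℤ) : star (mFourier n) * mFourier n = 1 := by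
  ext t
  rw [star_mFourier, ContinuousMap.mul_apply, ← mFourier_add, neg_add_cancel, mFourier_zero]

theorem mulLp_mFourier_basis (n m : ι → ℤ) :
    mulLp volume (mFourier n) (mFourierBasis m) = mFourierBasis (n + m) := by
  apply Lp.ext
  simp only [coe_mFourierBasis]
  filter_upwards [coeFn_mulLp (mFourier n) (mFourierLp 2 m : TorusL2 ι), coeFn_mFourierLp 2 m,
    coeFn_mFourierLp 2 (n + m)] with t h₁ h₂ h₃
  rw [h₁, h₂, h₃, mFourier_add]

theorem inner_basis_mulLp_mFourier (k n : ι → ℤ) (x : TorusL2 ι) :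
    ⟪mFourierBasis k, mulLp volume (mFourier n) x⟫_ℂ = ⟪mFourierBasis (k - n), x⟫_ℂ := by
  rw [inner_mulLp_right, star_mFourier, mulLp_mFourier_basis, neg_add_eq_sub]

theorem norm_mulLp_mFourier (n : ι → ℤ) (x : TorusL2 ι) :
    ‖mulLp volume (mFourier n) x‖ = ‖x‖ := by
  rw [← sq_eq_sq₀ (norm_nonneg _) (norm_nonneg _), ← ofReal_inj (K := ℂ), ofReal_pow, ofReal_pow,
    ← inner_self_eq_norm_sq_to_K, ← inner_self_eq_norm_sq_to_K, inner_mulLp_right,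
    ← mulLp_mul_apply, star_mFourier_mul_self, map_one]
  rfl

theorem mulLp_mFourier_mem {n : ι → ℤ} {S T : Set (ι → ℤ)} (hST : ∀ k ∈ S, n + k ∈ T)
    {x : TorusL2 ι} (hx : x ∈ supportedSubspace mFourierBasis S) :
    mulLp volume (mFourier n) x ∈ supportedSubspace mFourierBasis T := by
  refine mem_supportedSubspace.2 fun k hk ↦ ?_
  rw [inner_basis_mulLp_mFourier]
  refine mem_supportedSubspace.1 hx _ fun h ↦ hk ?_
  simpa using hST _ h

/-- The Hardy space of the polydisk, as a subspace of `L²(𝕋^ι)`. -/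
noncomputable def hardySpace (ι : Type*) [Fintype ι] : Submodule ℂ (TorusL2 ι) :=
  supportedSubspace mFourierBasis (Set.Ici 0)

/-- The vectors of `L²(𝕋^ι)` whose Fourier coefficients live in `{n | 0 ≤ n p}`. -/
noncomputable abbrev halfSpace (p : ι) : Submodule ℂ (TorusL2 ι) :=
  supportedSubspace mFourierBasis {n | 0 ≤ n p}

theorem hardySpace_le_halfSpace (p : ι) : hardySpace ι ≤ halfSpace p := fun _ hx ↦
  mem_supportedSubspace.2 fun _ hn ↦ mem_supportedSubspace.1 hx _ fun h ↦ hn (h p)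

/-- The Hardy space as a subspace of `halfSpace p`. -/
noncomputable def hardyIn (p : ι) : Submodule ℂ (halfSpace p) :=
  (hardySpace ι).comap (halfSpace p).subtype

instance {p : ι} : (hardyIn p).HasOrthogonalProjection :=
  have : CompleteSpace (hardyIn p) :=
    (isClosed_supportedSubspace.preimage continuous_subtype_val).isComplete.completeSpace_coe
  inferInstance

variable [DecidableEq ι]

/-- The action of polynomials on `L²(𝕋^ι)`, the variable `r` acting as multiplication by the `r`-th
coordinate function `mFourier (Pi.single r 1)`. -/
noncomputable def polyMul : MvPolynomial ι ℂ →ₐ[ℂ] (TorusL2 ι →L[ℂ] TorusL2 ι) :=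
  (mulLp volume).toAlgHom.comp (MvPolynomial.aeval fun r ↦ mFourier (Pi.single r 1))

theorem polyMul_X (r : ι) : polyMul (.X r) = mulLp volume (mFourier (Pi.single r (1 : ℤ))) := by
  simp [polyMul]

theorem polyMul_mem {T : Set (ι → ℤ)} (hT : ∀ r, ∀ k ∈ T, Pi.single r 1 + k ∈ T)
    (f : MvPolynomial ι ℂ) {x : TorusL2 ι} (hx : x ∈ supportedSubspace mFourierBasis T) :
    polyMul f x ∈ supportedSubspace mFourierBasis T := by
  induction f using MvPolynomial.induction_on generalizing x with
  | C c => simpa using Submodule.smul_mem _ c hx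
  | add f g hf hg => rw [map_add]; exact Submodule.add_mem _ (hf hx) (hg hx)
  | mul_X f r hf =>
    rw [map_mul, mul_apply_eq_comp, polyMul_X]
    exact hf (mulLp_mFourier_mem (hT r) hx)

/-- The vector `∏ r ∈ S, (1 - conj (a r) * z r)⁻¹` of `L²(𝕋^ι)`; for `S = univ` it is the Szegő
kernel of the polydisk at the point `a`. -/
noncomputable def szegoKernel (S : Finset ι) (a : ι → ℂ) : TorusL2 ι :=
  mulLp volume (∏ r ∈ S, Ring.inverse (1 - conj (a r) • mFourier (Pi.single r 1)))
    (mFourierBasis 0)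

variable {a c : ι → ℂ}

theorem norm_smul_mFourier_lt_one {r : ι} (ha : ‖a r‖ < 1) :
    ‖conj (a r) • (mFourier (Pi.single r 1) : C(UnitAddTorus ι, ℂ))‖ < 1 := by
  rwa [norm_smul, mFourier_norm, mul_one, RCLike.norm_conj]

theorem mulLp_szegoKernel {S : Finset ι} {r : ι} (hr : r ∈ S) (ha : ‖a r‖ < 1) :
    mulLp volume (1 - conj (a r) • mFourier (Pi.single r 1)) (szegoKernel S a) =
      szegoKernel (S.erase r) a := by
  rw [szegoKernel, ← mulLp_mul_apply, ← Finset.mul_prod_erase S _ hr, ← mul_assoc,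
    Ring.mul_inverse_cancel _ (isUnit_one_sub_of_norm_lt_one (norm_smul_mFourier_lt_one ha)),
    one_mul, szegoKernel]

theorem szegoKernel_mem {S : Finset ι} {T : Set (ι → ℤ)} (h₀ : 0 ∈ T)
    (hT : ∀ r ∈ S, ∀ k ∈ T, Pi.single r 1 + k ∈ T) (ha : ∀ r, ‖a r‖ < 1) :
    szegoKernel S a ∈ supportedSubspace mFourierBasis T := by
  induction S using Finset.induction_on with
  | empty => simpa [szegoKernel] using basis_mem_supportedSubspace (b := mFourierBasis) h₀
  | insert r S hrS ih =>
    refine mem_of_sub_apply_mem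
      (T := mulLp volume (conj (a r) • mFourier (Pi.single r 1)))
      ((norm_mulLp_le _).trans_lt (norm_smul_mFourier_lt_one (ha r))) (fun x hx ↦ ?_) ?_
    · rw [map_smul]
      exact Submodule.smul_mem _ _ (mulLp_mFourier_mem (hT r (Finset.mem_insert_self r S)) hx)
    · have := mulLp_szegoKernel (Finset.mem_insert_self r S) (ha r)
      rw [map_sub, map_one, Finset.erase_insert hrS] at this
      change (1 - mulLp volume _ : TorusL2 ι →L[ℂ] TorusL2 ι) _ ∈ _
      exact this ▸ ih fun r hr ↦ hT r (Finset.mem_insert_of_mem hr)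

theorem single_add_mem_Ici {ι : Type*} [DecidableEq ι] (r : ι) {k : ι → ℤ} (hk : k ∈ Set.Ici 0) :
    Pi.single r 1 + k ∈ Set.Ici 0 :=
  Set.mem_Ici.2 (add_nonneg (Pi.single_nonneg.2 zero_le_one) hk)

theorem mulLp_coord_mem_hardySpace (r : ι) {x : TorusL2 ι} (hx : x ∈ hardySpace ι) :
    mulLp volume (mFourier (Pi.single r 1)) x ∈ hardySpace ι :=
  mulLp_mFourier_mem (fun _ ↦ single_add_mem_Ici r) hx

theorem szegoKernel_mem_hardySpace (S : Finset ι) (ha : ∀ r, ‖a r‖ < 1) :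
    szegoKernel S a ∈ hardySpace ι :=
  szegoKernel_mem Set.self_mem_Ici (fun r _ _ ↦ single_add_mem_Ici r) ha

theorem inner_szegoKernel_mulLp (ha : ∀ r, ‖a r‖ < 1) (r : ι) {h : TorusL2 ι}
    (hh : h ∈ hardySpace ι) :
    ⟪szegoKernel univ a, mulLp volume (mFourier (Pi.single r 1)) h⟫_ℂ =
      a r * ⟪szegoKernel univ a, h⟫_ℂ := by
  set z : C(UnitAddTorus ι, ℂ) := mFourier (Pi.single r 1) with hz
  have hfac : star (1 - conj (a r) • z) * z = z - a r • 1 := by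
    rw [star_sub, star_one, star_smul, sub_mul, one_mul, smul_mul_assoc, hz,
      star_mFourier_mul_self]
    simp
  have horth : ⟪szegoKernel univ a, mulLp volume (z - a r • 1) h⟫_ℂ = 0 := by
    rw [← hfac, mulLp_mul_apply, inner_mulLp_right, star_star,
      mulLp_szegoKernel (mem_univ r) (ha r)]
    refine inner_eq_zero_of_disjoint (T := {n | n r = 0}) (T' := {n | 1 ≤ n r})
      (Set.disjoint_left.2 fun n h₀ h₁ ↦ ?_) (szegoKernel_mem (by simp) (fun s hs k hk ↦ ?_) ha)
      (mulLp_mFourier_mem (fun k hk ↦ ?_) hh)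
    · simp_all
    · simp_all [(Finset.ne_of_mem_erase hs).symm]
    · simpa using hk r
  rw [map_sub, map_smul, map_one, _root_.sub_apply, inner_sub_right, sub_eq_zero] at horth
  simpa [inner_smul_right] using horth

theorem inner_szegoKernel_polyMul (ha : ∀ r, ‖a r‖ < 1) (f : MvPolynomial ι ℂ) {h : TorusL2 ι}
    (hh : h ∈ hardySpace ι) :
    ⟪szegoKernel univ a, polyMul f h⟫_ℂ = f.eval a * ⟪szegoKernel univ a, h⟫_ℂ := by
  induction f using MvPolynomial.induction_on generalizing h with
  | C c => simp [inner_smul_right]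
  | add f g hf hg =>
    rw [map_add, _root_.add_apply, inner_add_right, hf hh, hg hh, map_add, add_mul]
  | mul_X f r hf =>
    rw [map_mul, mul_apply_eq_comp, polyMul_X,
      hf (mulLp_coord_mem_hardySpace r hh), inner_szegoKernel_mulLp ha r hh,
      map_mul, MvPolynomial.eval_X, mul_assoc]

theorem polyMul_prod_szegoKernel (S : Finset ι) (ha : ∀ r, ‖a r‖ < 1) :
    polyMul (∏ r ∈ S, (1 - .C (conj (a r)) * .X r)) (szegoKernel S a) = mFourierBasis 0 := by
  have hinv : (∏ r ∈ S, (1 - conj (a r) • mFourier (Pi.single r 1))) *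
      (∏ r ∈ S, Ring.inverse (1 - conj (a r) • mFourier (Pi.single r 1))) =
        (1 : C(UnitAddTorus ι, ℂ)) := by
    rw [← Finset.prod_mul_distrib]
    exact Finset.prod_eq_one fun r _ ↦ Ring.mul_inverse_cancel _
      (isUnit_one_sub_of_norm_lt_one (norm_smul_mFourier_lt_one (ha r)))
  have := mulLp_mul_apply (μ := volume) (∏ r ∈ S, (1 - conj (a r) • mFourier (Pi.single r 1)))
    (∏ r ∈ S, Ring.inverse (1 - conj (a r) • mFourier (Pi.single r 1))) (mFourierBasis (0 : ι → ℤ))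
  rw [hinv, map_one] at this
  simpa [polyMul, szegoKernel, map_prod, ← Algebra.smul_def] using this.symm

theorem prod_mul_inner_szegoKernel (ha : ∀ r, ‖a r‖ < 1) (hc : ∀ r, ‖c r‖ < 1) :
    (∏ r, (1 - a r * conj (c r))) * ⟪szegoKernel univ a, szegoKernel univ c⟫_ℂ =
      ⟪szegoKernel univ a, (mFourierBasis 0 : TorusL2 ι)⟫_ℂ := by
  rw [← polyMul_prod_szegoKernel univ hc,
    inner_szegoKernel_polyMul ha _ (szegoKernel_mem_hardySpace univ hc)]
  simp [map_prod, mul_comm]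

theorem szegoKernel_zero (S : Finset ι) : szegoKernel S 0 = mFourierBasis 0 := by
  have h (r : ι) :
      1 - conj ((0 : ι → ℂ) r) • (mFourier (Pi.single r 1) : C(UnitAddTorus ι, ℂ)) = 1 := by
    ext
    simp
  simp_rw [szegoKernel, h, Ring.inverse_one, prod_const_one, map_one]
  rfl

theorem inner_szegoKernel_basis_zero (ha : ∀ r, ‖a r‖ < 1) :
    ⟪szegoKernel univ a, (mFourierBasis 0 : TorusL2 ι)⟫_ℂ = 1 := by
  have := prod_mul_inner_szegoKernel (a := 0) (by simp) ha
  rw [szegoKernel_zero, inner_self_eq_norm_sq_to_K, mFourierBasis.orthonormal.norm_eq_one] at this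
  rw [← inner_conj_symm]
  simpa using congr(conj $this)

variable {p q : ι}

theorem polyMul_mem_halfSpace (p : ι) (f : MvPolynomial ι ℂ) {x : TorusL2 ι}
    (hx : x ∈ halfSpace p) : polyMul f x ∈ halfSpace p := by
  refine polyMul_mem (fun r k (hk : 0 ≤ k p) ↦ ?_) f hx
  have hr : (0 : ι → ℤ) ≤ Pi.single r 1 := Pi.single_nonneg.2 zero_le_one
  exact add_nonneg (hr p) hk

/-- Multiplication by the polynomial `f` on `halfSpace p`. -/
noncomputable def halfMul (p : ι) (f : MvPolynomial ι ℂ) : halfSpace p →L[ℂ] halfSpace p :=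
  (polyMul f).restrict fun _ ↦ polyMul_mem_halfSpace p f

theorem commute_halfMul (p : ι) (f g : MvPolynomial ι ℂ) : Commute (halfMul p f) (halfMul p g) := by
  ext1 x
  apply Subtype.ext
  have := (Commute.all f g).map polyMul
  exact congr($this.eq x)

theorem halfMul_mem_hardyIn (f : MvPolynomial ι ℂ) {x : halfSpace p} (hx : x ∈ hardyIn p) :
    halfMul p f x ∈ hardyIn p :=
  polyMul_mem (fun r _ ↦ single_add_mem_Ici r) f hx

theorem norm_halfMul_X (p r : ι) (x : halfSpace p) : ‖halfMul p (.X r) x‖ = ‖x‖ := by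
  change ‖polyMul (.X r) (x : TorusL2 ι)‖ = ‖(x : TorusL2 ι)‖
  rw [polyMul_X, norm_mulLp_mFourier]

theorem norm_polyMul_lt_one {f : MvPolynomial ι ℂ} (hf : ∀ z, ‖z‖ ≤ 1 → ‖f.eval z‖ < 1) :
    ‖polyMul f‖ < 1 := by
  refine (norm_mulLp_le _).trans_lt ((ContinuousMap.norm_lt_iff _ one_pos).2 fun t ↦ ?_)
  set z : ι → ℂ := fun r ↦ mFourier (Pi.single r 1) t
  have hz : ‖z‖ ≤ 1 := (pi_norm_le_iff_of_nonneg zero_le_one).2 fun r ↦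
    ((mFourier (Pi.single r 1)).norm_coe_le_norm t).trans mFourier_norm.le
  have heval := MvPolynomial.comp_aeval_apply (fun r ↦ mFourier (Pi.single r 1))
    (ContinuousMap.evalAlgHom (X := UnitAddTorus ι) ℂ ℂ t) f
  exact (congrArg norm heval).trans_lt (hf z hz)

theorem norm_halfMul_le (p : ι) (f : MvPolynomial ι ℂ) : ‖halfMul p f‖ ≤ ‖polyMul f‖ :=
  opNorm_le_bound _ (norm_nonneg _) fun x ↦ (polyMul f).le_opNorm x

theorem halfMul_X_mem_orthogonal {x : halfSpace p} (hx : x ∈ (hardyIn p)ᗮ) :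
    halfMul p (.X p) x ∈ (hardyIn p)ᗮ := by
  have hx' : (x : TorusL2 ι) ∈ supportedSubspace mFourierBasis {n | 0 ≤ n p ∧ ¬ 0 ≤ n} := by
    refine mem_supportedSubspace.2 fun n hn ↦ ?_
    by_cases hp : 0 ≤ n p
    · have h₀ : 0 ≤ n := by_contra fun h ↦ hn ⟨hp, h⟩
      exact hx ⟨mFourierBasis n, basis_mem_supportedSubspace hp⟩ (basis_mem_supportedSubspace h₀)
    · exact mem_supportedSubspace.1 x.2 n hp
  intro y hy
  change ⟪(y : TorusL2 ι), polyMul (.X p) x⟫_ℂ = 0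
  rw [polyMul_X]
  refine inner_eq_zero_of_disjoint (T := Set.Ici 0) (T' := {n | ¬ 0 ≤ n}) ?_ hy
    (mulLp_mFourier_mem (fun k hk h ↦ ?_) hx')
  · exact Set.disjoint_left.2 fun n h₁ h₂ ↦ h₂ h₁
  · refine hk.2 fun r ↦ ?_
    obtain rfl | hr := eq_or_ne r p
    · exact hk.1
    · simpa [hr] using h r

theorem surjective_halfMul_X (hpq : p ≠ q) : Function.Surjective (halfMul p (.X q)) := by
  intro x
  refine ⟨⟨mulLp volume (star (mFourier (Pi.single q 1))) x, ?_⟩, Subtype.ext ?_⟩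
  · rw [star_mFourier]
    refine mulLp_mFourier_mem (fun k hk ↦ ?_) x.2
    simpa [hpq] using hk
  · change polyMul (.X q) (mulLp volume _ (x : TorusL2 ι)) = x
    rw [polyMul_X, ← mulLp_mul_apply, mul_comm, star_mFourier_mul_self, map_one]
    rfl

theorem exists_posSemidef_of_polynomial {n : Type*} (hpq : p ≠ q) {f : MvPolynomial ι ℂ}
    (hf : ∀ z, ‖z‖ ≤ 1 → ‖f.eval z‖ < 1) {lam : n → ι → ℂ} (hlam : ∀ i r, ‖lam i r‖ < 1) :
    ∃ Γp Γq : Matrix n n ℂ, Γp.PosSemidef ∧ Γq.PosSemidef ∧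
      ∀ i j, 1 - f.eval (lam i) * conj (f.eval (lam j)) =
        (∏ r ∈ univ.erase q, (1 - lam i r * conj (lam j r))) * Γq i j +
        (∏ r ∈ univ.erase p, (1 - lam i r * conj (lam j r))) * Γp i j := by
  have hmem (i) : szegoKernel univ (lam i) ∈ hardySpace ι :=
    szegoKernel_mem_hardySpace univ (hlam i)
  set k : n → halfSpace p := fun i ↦ ⟨szegoKernel univ (lam i), hardySpace_le_halfSpace p (hmem i)⟩
  have hk (g : MvPolynomial ι ℂ) (i) (x) (hx : x ∈ hardyIn p) :
      ⟪k i, halfMul p g x⟫_ℂ = g.eval (lam i) * ⟪k i, x⟫_ℂ :=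
    inner_szegoKernel_polyMul (hlam i) g hx
  obtain ⟨A, B, hA, hB, hAB⟩ := exists_posSemidef_splitting
    ((norm_halfMul_le p f).trans_lt (norm_polyMul_lt_one hf)) (fun _ ↦ halfMul_mem_hardyIn f)
    (norm_halfMul_X p p) (fun _ ↦ halfMul_mem_hardyIn _) (fun _ ↦ halfMul_X_mem_orthogonal)
    (commute_halfMul p _ f) (norm_halfMul_X p q) (surjective_halfMul_X hpq)
    (fun _ ↦ halfMul_mem_hardyIn _) (commute_halfMul p _ f) (k := k) hmem
    (hk f) (hk (.X p)) (hk (.X q))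
  refine ⟨_, _, hB, hA, fun i j ↦ ?_⟩
  have hgram : _ * ⟪k i, k j⟫_ℂ = 1 := (prod_mul_inner_szegoKernel (hlam i) (hlam j)).trans
    (inner_szegoKernel_basis_zero (hlam i))
  have hp := prod_erase_mul univ (fun r ↦ 1 - lam i r * conj (lam j r)) (mem_univ p)
  have hq := prod_erase_mul univ (fun r ↦ 1 - lam i r * conj (lam j r)) (mem_univ q)
  simp only [of_apply, MvPolynomial.eval_X]
  linear_combination (exp := 1) (-(1 - f.eval (lam i) * conj (f.eval (lam j)))) * hgram
    - (∏ r, (1 - lam i r * conj (lam j r))) * hAB i j - B i j * hp - A i j * hq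

end Torus

section Approximation

open Filter Function Metric MeasureTheory Topology

theorem mem_of_intervalAverage_apply_eq {Y : Type*} [TopologicalSpace Y] [CompactSpace Y]
    {A : Submodule ℂ C(Y, ℂ)} (hA : IsClosed (A : Set C(Y, ℂ))) {G : C(ℝ, C(Y, ℂ))}
    (hG : ∀ θ, G θ ∈ A) {a b : ℝ} (hab : a ≠ b) {g : C(Y, ℂ)}
    (hg : ∀ y, ⨍ θ in a..b, G θ y = g y) : g ∈ A := by
  have hint : IntervalIntegrable G volume a b := G.continuous.intervalIntegrable a b
  have hmem : ⨍ θ in a..b, G θ ∈ A :=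
    (A.restrictScalars ℝ).convex.set_average_mem hA
      (by simp [Real.volume_uIoc, sub_eq_zero, hab.symm]) (by simp [Real.volume_uIoc])
      (.of_forall hG) (intervalIntegrable_iff.1 hint)
  convert hmem
  ext y
  rw [← hg, interval_average_eq, interval_average_eq, ContinuousMap.smul_apply]
  exact congr(_ • $((ContinuousMap.evalCLM ℝ y).intervalIntegral_comp_comm hint))

theorem exists_mem_mul_eq_one {𝕜 B : Type*} [NormedField 𝕜] [NormedRing B] [NormedAlgebra 𝕜 B]
    [CompleteSpace B] {A : Subalgebra 𝕜 B} (hA : IsClosed (A : Set B)) {x : B} (hx : x ∈ A)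
    (hx₁ : ‖x‖ < 1) : ∃ y ∈ A, (1 - x) * y = 1 := by
  have : CompleteSpace A := hA.completeSpace_coe
  obtain ⟨u, hu⟩ := isUnit_one_sub_of_norm_lt_one (x := (⟨x, hx⟩ : A)) hx₁
  refine ⟨(↑u⁻¹ : A), SetLike.coe_mem _, ?_⟩
  simpa [hu] using congr(($(u.mul_inv) : B))

variable {ι : Type*} [Fintype ι]

/-- The coordinate function `z ↦ z r` on the closed unit polydisk. -/
def coordinate (r : ι) : C(closedBall (0 : ι → ℂ) 1, ℂ) :=
  ⟨fun z ↦ z.1 r, (continuous_apply r).comp continuous_subtype_val⟩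

theorem norm_coordinate_le (r : ι) : ‖coordinate r‖ ≤ 1 :=
  (ContinuousMap.norm_le _ zero_le_one).2 fun z ↦
    (norm_le_pi_norm z.1 r).trans (mem_closedBall_zero_iff.1 z.2)

variable (ι) in
/-- The polydisk algebra: the uniform limits of polynomials on the closed unit polydisk. -/
noncomputable def polydiskAlgebra : Subalgebra ℂ C(closedBall (0 : ι → ℂ) 1, ℂ) :=
  (MvPolynomial.aeval coordinate : MvPolynomial ι ℂ →ₐ[ℂ] _).range.topologicalClosure

theorem isClosed_polydiskAlgebra :
    IsClosed (polydiskAlgebra ι : Set C(closedBall (0 : ι → ℂ) 1, ℂ)) :=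
  Subalgebra.isClosed_topologicalClosure _

theorem coordinate_mem_polydiskAlgebra (r : ι) : coordinate r ∈ polydiskAlgebra ι :=
  Subalgebra.le_topologicalClosure _ ⟨MvPolynomial.X r, MvPolynomial.aeval_X _ r⟩

theorem aeval_coordinate_apply (p : MvPolynomial ι ℂ) (z : closedBall (0 : ι → ℂ) 1) :
    MvPolynomial.aeval coordinate p z = p.eval z.1 :=
  MvPolynomial.comp_aeval_apply coordinate
    (ContinuousMap.evalAlgHom (X := closedBall (0 : ι → ℂ) 1) ℂ ℂ z) p

theorem exists_mem_polydiskAlgebra_eq_div {ζ : ℂ} (hζ : 1 < ‖ζ‖) (s : ι) :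
    ∃ k ∈ polydiskAlgebra ι, ∀ z, k z = ζ / (ζ - z.1 s) := by
  have hζ₀ : ζ ≠ 0 := norm_pos_iff.1 (zero_lt_one.trans hζ)
  have hnorm : ‖ζ⁻¹ • coordinate s‖ < 1 := by
    rw [norm_smul, norm_inv]
    exact mul_lt_one_of_nonneg_of_lt_one_left (by positivity) (inv_lt_one_of_one_lt₀ hζ)
      (norm_coordinate_le s)
  obtain ⟨k, hk, hk₁⟩ := exists_mem_mul_eq_one isClosed_polydiskAlgebra
    ((polydiskAlgebra ι).smul_mem (coordinate_mem_polydiskAlgebra s) ζ⁻¹) hnorm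
  refine ⟨k, hk, fun z ↦ ?_⟩
  have hz : (1 - ζ⁻¹ * z.1 s) * k z = 1 := DFunLike.congr_fun hk₁ z
  rw [eq_div_iff]
  · linear_combination ζ * hz + k z * z.1 s * mul_inv_cancel₀ hζ₀
  · rintro h
    simp [← sub_eq_zero.1 h, hζ₀] at hz

section CauchyFormula

variable [DecidableEq ι]

omit [Fintype ι] in
theorem differentiable_update_left [Finite ι] (s : ι) (ζ : ℂ) :
    Differentiable ℂ fun z : ι → ℂ ↦ update z s ζ := by
  have := Fintype.ofFinite ι
  refine differentiable_pi.2 fun r ↦ ?_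
  obtain rfl | hr := eq_or_ne r s
  · simp
  · simpa [hr] using differentiable_apply r

theorem update_mem_ball {R : ℝ} {z : ι → ℂ} (hz : z ∈ ball 0 R) {s : ι} {ζ : ℂ}
    (hζ : ζ ∈ ball 0 R) : update z s ζ ∈ ball 0 R := by
  rw [mem_ball_zero_iff] at *
  refine (pi_norm_lt_iff ((norm_nonneg z).trans_lt hz)).2 fun r ↦ ?_
  obtain rfl | hr := eq_or_ne r s
  · simpa using hζ
  · simpa [hr] using (norm_le_pi_norm z r).trans_lt hz

theorem circleAverage_div_mul_update {R : ℝ} {f : (ι → ℂ) → ℂ}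
    (hf : DifferentiableOn ℂ f (ball 0 R)) {ρ : ℝ} (hρ : ρ < R) {z : ι → ℂ} (hz : z ∈ ball 0 ρ)
    (s : ι) :
    Real.circleAverage (fun ζ ↦ ζ / (ζ - z s) * f (update z s ζ)) 0 ρ = f z := by
  have hρ₀ : 0 < ρ := pos_of_mem_ball hz
  have hslice : DifferentiableOn ℂ (fun ζ ↦ f (update z s ζ)) (closedBall 0 ρ) :=
    hf.comp (fun ζ _ ↦ (hasFDerivAt_update z ζ).differentiableAt.differentiableWithinAt)
      fun ζ hζ ↦ update_mem_ball (ball_subset_ball hρ.le hz) (closedBall_subset_ball hρ hζ)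
  rw [← abs_of_pos hρ₀, ← closure_ball _ (abs_pos.2 hρ₀.ne').ne'] at hslice
  have hzs : z s ∈ ball 0 |ρ| := by
    rw [abs_of_pos hρ₀, mem_ball_zero_iff]
    exact (norm_le_pi_norm z s).trans_lt (mem_ball_zero_iff.1 hz)
  simpa using hslice.diffContOnCl.circleAverage_smul_div hzs

/-- The integrand of Cauchy's formula in the coordinate `s` on the circle of radius `ρ`, as a
curve in the space of continuous functions on the closed unit polydisk. -/
noncomputable def cauchyIntegrand {R : ℝ} {f : (ι → ℂ) → ℂ} (hf : ContinuousOn f (ball 0 R))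
    (s : ι) {ρ : ℝ} (hρ : ρ ∈ Set.Ioo 1 R) : C(ℝ, C(closedBall (0 : ι → ℂ) 1, ℂ)) :=
  ContinuousMap.curry
    { toFun x := circleMap 0 ρ x.1 / (circleMap 0 ρ x.1 - x.2.1 s) *
        f (update x.2.1 s (circleMap 0 ρ x.1))
      continuous_toFun := by
        have hρ₀ : 0 < ρ := zero_lt_one.trans hρ.1
        have hζ : Continuous fun x : ℝ × closedBall (0 : ι → ℂ) 1 ↦ circleMap 0 ρ x.1 :=
          (continuous_circleMap 0 ρ).comp continuous_fst
        have hz : Continuous fun x : ℝ × closedBall (0 : ι → ℂ) 1 ↦ x.2.1 :=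
          continuous_subtype_val.comp continuous_snd
        refine (hζ.div (hζ.sub ((continuous_apply s).comp hz)) fun x h ↦ ?_).mul
          (hf.comp_continuous (hz.update s hζ) fun x ↦ update_mem_ball
            (closedBall_subset_ball (hρ.1.trans hρ.2) x.2.2) ?_)
        · have hnorm := congr(‖$(sub_eq_zero.1 h)‖)
          rw [norm_circleMap_zero, abs_of_pos hρ₀] at hnorm
          exact ((norm_le_pi_norm x.2.1 s).trans (mem_closedBall_zero_iff.1 x.2.2)).not_gt
            (hnorm ▸ hρ.1)
        · simpa [abs_of_pos hρ₀] using hρ.2 }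

-- Cauchy's formula in the coordinate `s` writes `f` as an average over `‖ζ‖ = ρ` of products of its
-- slices with the resolvents `z ↦ ζ / (ζ - z s)`, which belong to the polydisk algebra.
theorem mem_polydiskAlgebra_of_slices {R : ℝ} {f : (ι → ℂ) → ℂ}
    (hf : DifferentiableOn ℂ f (ball 0 R)) (s : ι) {ρ : ℝ} (hρ : ρ ∈ Set.Ioo 1 R)
    (hslice : ∀ ζ ∈ sphere (0 : ℂ) ρ, ∃ h ∈ polydiskAlgebra ι, ∀ z, h z = f (update z.1 s ζ))
    {g : C(closedBall (0 : ι → ℂ) 1, ℂ)} (hg : ∀ z, g z = f z) : g ∈ polydiskAlgebra ι := by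
  have hρ₀ : 0 < ρ := zero_lt_one.trans hρ.1
  refine mem_of_intervalAverage_apply_eq (A := (polydiskAlgebra ι).toSubmodule)
    (G := cauchyIntegrand hf.continuousOn s hρ) isClosed_polydiskAlgebra (fun θ ↦ ?_)
    Real.two_pi_pos.ne fun z ↦ ?_
  · have hζ := circleMap_mem_sphere 0 hρ₀.le θ
    obtain ⟨h, hh, hh_eq⟩ := hslice _ hζ
    obtain ⟨k, hk, hk_eq⟩ := exists_mem_polydiskAlgebra_eq_div
      ((mem_sphere_zero_iff_norm.1 hζ).symm ▸ hρ.1) s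
    have hkh : cauchyIntegrand hf.continuousOn s hρ θ = k * h := by
      ext z
      rw [ContinuousMap.mul_apply, hk_eq, hh_eq]
      rfl
    exact hkh ▸ (polydiskAlgebra ι).mul_mem hk hh
  · rw [hg, ← circleAverage_div_mul_update hf hρ.2 (closedBall_subset_ball hρ.1 z.2) s,
      Real.circleAverage_eq_intervalAverage]
    rfl

end CauchyFormula

theorem mem_polydiskAlgebra_of_dependsOn {R : ℝ} (hR : 1 < R) {S : Finset ι} :
    ∀ {f : (ι → ℂ) → ℂ}, DifferentiableOn ℂ f (ball 0 R) → DependsOn f S →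
      ∀ {g : C(closedBall (0 : ι → ℂ) 1, ℂ)}, (∀ z, g z = f z) → g ∈ polydiskAlgebra ι := by
  classical
  induction S using Finset.induction_on with
  | empty =>
    intro f _ hS g hg
    convert (polydiskAlgebra ι).algebraMap_mem (f 0)
    ext z
    rw [hg]
    exact hS (by simp)
  | insert s S _ ih =>
    intro f hf hS g hg
    obtain ⟨ρ, hρ⟩ := exists_between hR
    refine mem_polydiskAlgebra_of_slices hf s hρ (fun ζ hζ ↦ ?_) hg
    have hslice : DifferentiableOn ℂ (fun z ↦ f (update z s ζ)) (ball 0 R) :=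
      hf.comp (differentiable_update_left s ζ).differentiableOn fun z hz ↦
        update_mem_ball hz (closedBall_subset_ball hρ.2 (sphere_subset_closedBall hζ))
    refine ⟨⟨_, (hslice.continuousOn.mono (closedBall_subset_ball hR)).domRestrict⟩,
      ih hslice (fun x y hxy ↦ hS fun r hr ↦ ?_) fun _ ↦ rfl, fun _ ↦ rfl⟩
    obtain rfl | hrs := eq_or_ne r s
    · simp
    · simpa [hrs] using hxy r (by simpa [hrs] using hr)

theorem exists_polynomial_norm_sub_lt {R : ℝ} (hR : 1 < R) {f : (ι → ℂ) → ℂ}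
    (hf : DifferentiableOn ℂ f (ball 0 R)) {ε : ℝ} (hε : 0 < ε) :
    ∃ p : MvPolynomial ι ℂ, ∀ z ∈ closedBall 0 1, ‖p.eval z - f z‖ < ε := by
  let g : C(closedBall (0 : ι → ℂ) 1, ℂ) :=
    ⟨_, (hf.continuousOn.mono (closedBall_subset_ball hR)).domRestrict⟩
  have hg : g ∈ polydiskAlgebra ι :=
    mem_polydiskAlgebra_of_dependsOn hR (S := univ) hf (by simpa using dependsOn_univ f)
      fun _ ↦ rfl
  obtain ⟨_, ⟨p, rfl⟩, hp⟩ := mem_closure_iff.1 hg ε hε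
  refine ⟨p, fun z hz ↦ ?_⟩
  have h : dist (f z) (MvPolynomial.aeval coordinate p ⟨z, hz⟩) < ε :=
    (ContinuousMap.dist_lt_iff hε).1 hp ⟨z, hz⟩
  rwa [dist_comm, dist_eq_norm, aeval_coordinate_apply] at h

theorem exists_polynomial_norm_lt_one {φ : (ι → ℂ) → ℂ} (hφ : DifferentiableOn ℂ φ (ball 0 1))
    (hφ₁ : ∀ z ∈ ball 0 1, ‖φ z‖ ≤ 1) {t : ℝ} (ht : t ∈ Set.Ioo 0 1) :
    ∃ p : MvPolynomial ι ℂ, ∀ z ∈ closedBall 0 1,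
      ‖p.eval z‖ < 1 ∧ ‖p.eval z - t * φ (t • z)‖ < 1 - t := by
  have hmaps : Set.MapsTo (fun z : ι → ℂ ↦ t • z) (ball 0 t⁻¹) (ball 0 1) := fun z hz ↦ by
    rw [mem_ball_zero_iff] at *
    rwa [norm_smul, Real.norm_of_nonneg ht.1.le, ← lt_inv_mul_iff₀ ht.1, mul_one]
  have hdiff : DifferentiableOn ℂ (fun z ↦ t * φ (t • z)) (ball 0 t⁻¹) :=
    (hφ.comp (by fun_prop) hmaps).const_mul _
  have ht₁ : 1 < t⁻¹ := (one_lt_inv₀ ht.1).2 ht.2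
  obtain ⟨p, hp⟩ := exists_polynomial_norm_sub_lt ht₁ hdiff (sub_pos.2 ht.2)
  refine ⟨p, fun z hz ↦ ⟨?_, hp z hz⟩⟩
  have hz₁ : ‖t * φ (t • z)‖ ≤ t := by
    rw [norm_mul, Complex.norm_of_nonneg ht.1.le]
    exact mul_le_of_le_one_right ht.1.le (hφ₁ _ (hmaps (closedBall_subset_ball ht₁ hz)))
  calc ‖p.eval z‖ ≤ ‖p.eval z - t * φ (t • z)‖ + ‖t * φ (t • z)‖ := by
        simpa using norm_add_le (p.eval z - t * φ (t • z)) (t * φ (t • z))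
    _ < (1 - t) + t := add_lt_add_of_lt_of_le (hp z hz) hz₁
    _ = 1 := sub_add_cancel 1 t

/-- The families of values at the points `lam i` of the polynomials of modulus less than one on the
closed unit polydisk. -/
def schurPolynomialValues {n : Type*} (lam : n → ι → ℂ) : Set (n → ℂ) :=
  {v | ∃ f : MvPolynomial ι ℂ, (∀ z, ‖z‖ ≤ 1 → ‖f.eval z‖ < 1) ∧ ∀ i, v i = f.eval (lam i)}

theorem mem_closure_schurPolynomialValues {n : Type*} {φ : (ι → ℂ) → ℂ}
    (hφ : DifferentiableOn ℂ φ (ball 0 1)) (hφ₁ : ∀ z ∈ ball 0 1, ‖φ z‖ ≤ 1) {lam : n → ι → ℂ}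
    (hlam : ∀ i, lam i ∈ ball 0 1) :
    (fun i ↦ φ (lam i)) ∈ closure (schurPolynomialValues lam) := by
  choose! p hp using fun t ht ↦ exists_polynomial_norm_lt_one hφ hφ₁ (t := t) ht
  have ht : ∀ᶠ t : ℝ in 𝓝[<] 1, t ∈ Set.Ioo (0 : ℝ) 1 := Ioo_mem_nhdsLT zero_lt_one
  refine mem_closure_of_tendsto (f := fun t i ↦ (p t).eval (lam i)) (tendsto_pi_nhds.2 fun i ↦ ?_)
    (ht.mono fun t ht ↦ ⟨p t, fun z hz ↦ (hp t ht z (by simpa using hz)).1, fun i ↦ rfl⟩)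
  have hdilate : Tendsto (fun t : ℝ ↦ t * φ (t • lam i)) (𝓝[<] 1) (𝓝 (φ (lam i))) := by
    have hcont : ContinuousAt (fun t : ℝ ↦ t * φ (t • lam i)) 1 := by
      refine Complex.continuous_ofReal.continuousAt.mul (ContinuousAt.comp_of_eq ?_
        (by fun_prop) (one_smul ℝ (lam i)))
      exact hφ.continuousOn.continuousAt (isOpen_ball.mem_nhds (hlam i))
    simpa using hcont.tendsto.mono_left nhdsWithin_le_nhds
  have hdist : Tendsto (fun t : ℝ ↦ (p t).eval (lam i) - t * φ (t • lam i)) (𝓝[<] 1) (𝓝 0) := by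
    refine squeeze_zero_norm' (ht.mono fun t ht ↦
      (hp t ht _ (ball_subset_closedBall (hlam i))).2.le) ?_
    have : Tendsto (fun t : ℝ ↦ 1 - t) (𝓝 1) (𝓝 0) := by
      simpa using (tendsto_id (x := 𝓝 (1 : ℝ))).const_sub 1
    exact this.mono_left nhdsWithin_le_nhds
  simpa using hdist.add hdilate

end Approximation

section Compactness

variable {𝕜 n : Type*} [RCLike 𝕜]

theorem norm_apply_sq_le_of_posSemidef {A : Matrix n n 𝕜} (hA : A.PosSemidef) (i j : n) :
    ‖A i j‖ ^ 2 ≤ ‖A i i‖ * ‖A j j‖ := by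
  have hdet := (hA.submatrix ![i, j]).det_nonneg
  have hdiag (k : n) : A k k = (‖A k k‖ : 𝕜) := (norm_of_nonneg' hA.diag_nonneg).symm
  simp only [det_fin_two, submatrix_apply, cons_val_zero, cons_val_one] at hdet
  rw [← hA.isHermitian.apply j i, RCLike.star_def, RCLike.mul_conj, hdiag i, hdiag j] at hdet
  exact_mod_cast sub_nonneg.1 hdet

theorem isClosed_setOf_posSemidef : IsClosed {A : Matrix n n 𝕜 | A.PosSemidef} := by
  simp only [PosSemidef, IsHermitian, Finsupp.sum, Set.ofPred_and, Set.ofPred_forall]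
  exact (isClosed_eq (by fun_prop) continuous_id).inter
    (isClosed_iInter fun x ↦ isClosed_le continuous_const (by fun_prop))

theorem isClosed_setOf_norm_diag_le (b : n → ℝ) :
    IsClosed {A : Matrix n n 𝕜 | ∀ i, ‖A i i‖ ≤ b i} :=
  Set.ofPred_forall _ ▸ isClosed_iInter fun i ↦
    isClosed_le (continuous_id.matrix_elem i i).norm continuous_const

theorem isCompact_setOf_posSemidef_norm_diag_le (b : n → ℝ) :
    IsCompact {A : Matrix n n 𝕜 | A.PosSemidef ∧ ∀ i, ‖A i i‖ ≤ b i} := by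
  have hball : IsCompact (Set.univ.pi fun i ↦ Set.univ.pi fun j ↦
      Metric.closedBall (0 : 𝕜) √(b i * b j) : Set (Matrix n n 𝕜)) :=
    isCompact_univ_pi fun i ↦ isCompact_univ_pi fun j ↦ isCompact_closedBall _ _
  refine hball.of_isClosed_subset
    (isClosed_setOf_posSemidef.inter (isClosed_setOf_norm_diag_le b)) fun A hA i _ j _ ↦ ?_
  have hb (k : n) : ‖A k k‖ ≤ b k := hA.2 k
  rw [mem_closedBall_zero_iff]
  exact Real.le_sqrt_of_sq_le ((norm_apply_sq_le_of_posSemidef hA.1 i j).trans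
    (mul_le_mul (hb i) (hb j) (norm_nonneg _) ((norm_nonneg _).trans (hb i))))

theorem norm_le_norm_of_nonneg_of_le {x y : 𝕜} (hx : 0 ≤ x) (hxy : x ≤ y) : ‖x‖ ≤ ‖y‖ := by
  rwa [← ofReal_le_ofReal (K := 𝕜), norm_of_nonneg' hx, norm_of_nonneg' (hx.trans hxy)]

theorem norm_diag_le_of_hadamard_add_hadamard {K L A B : Matrix n n 𝕜} {i : n} (hK : 0 < K i i)
    (hL : 0 ≤ L i i) (hA : A.PosSemidef) (hB : B.PosSemidef) :
    ‖A i i‖ ≤ ‖(K ⊙ A + L ⊙ B) i i‖ / ‖K i i‖ := by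
  rw [le_div_iff₀' (norm_pos_iff.2 hK.ne'), ← norm_mul]
  exact norm_le_norm_of_nonneg_of_le (mul_nonneg hK.le hA.diag_nonneg)
    (le_add_of_nonneg_right (mul_nonneg hL hB.diag_nonneg))

theorem isClosed_setOf_hadamard_add_hadamard {K L : Matrix n n 𝕜} (hK : ∀ i, 0 < K i i)
    (hL : ∀ i, 0 < L i i) (b : n → ℝ) :
    IsClosed {E : Matrix n n 𝕜 | (∀ i, ‖E i i‖ ≤ b i) ∧
      ∃ A B : Matrix n n 𝕜, A.PosSemidef ∧ B.PosSemidef ∧ K ⊙ A + L ⊙ B = E} := by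
  have hcont : Continuous fun x : Matrix n n 𝕜 × Matrix n n 𝕜 ↦ K ⊙ x.1 + L ⊙ x.2 := by
    refine continuous_pi fun i ↦ continuous_pi fun j ↦ ?_
    simp only [Matrix.add_apply, hadamard_apply]
    fun_prop
  have himage := (((isCompact_setOf_posSemidef_norm_diag_le fun i ↦ b i / ‖K i i‖).prod
    (isCompact_setOf_posSemidef_norm_diag_le fun i ↦ b i / ‖L i i‖)).image hcont).isClosed
  convert (isClosed_setOf_norm_diag_le b).inter himage
  refine Set.ext fun E ↦ and_congr_right fun hE ↦ ⟨?_, ?_⟩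
  · rintro ⟨A, B, hA, hB, rfl⟩
    refine ⟨(A, B), ⟨⟨hA, fun i ↦ ?_⟩, hB, fun i ↦ ?_⟩, rfl⟩
    · exact (norm_diag_le_of_hadamard_add_hadamard (hK i) (hL i).le hA hB).trans
        (div_le_div_of_nonneg_right (hE i) (norm_nonneg _))
    · refine (norm_diag_le_of_hadamard_add_hadamard (hL i) (hK i).le hB hA).trans ?_
      exact div_le_div_of_nonneg_right (add_comm (K ⊙ A) (L ⊙ B) ▸ hE i) (norm_nonneg _)
  · rintro ⟨⟨A, B⟩, ⟨⟨hA, -⟩, hB, -⟩, rfl⟩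
    exact ⟨A, B, hA, hB, rfl⟩

end Compactness

section Kernels

variable {ι n : Type*} [Fintype ι] [DecidableEq ι]

/-- The reciprocal of the Szegő kernel of the polydisk in the variables other than `p`, evaluated
at the points `lam i`. -/
def szegoDenominator (lam : n → ι → ℂ) (p : ι) : Matrix n n ℂ :=
  of fun i j ↦ ∏ r ∈ univ.erase p, (1 - lam i r * conj (lam j r))

theorem szegoDenominator_diag_pos {lam : n → ι → ℂ} {i : n} (hlam : lam i ∈ Metric.ball 0 1)
    (p : ι) : 0 < szegoDenominator lam p i i := by
  refine prod_pos fun r _ ↦ ?_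
  have hr : ‖lam i r‖ < 1 := (norm_le_pi_norm _ r).trans_lt (mem_ball_zero_iff.1 hlam)
  rw [Complex.mul_conj', sub_pos]
  exact_mod_cast pow_lt_one₀ (norm_nonneg _) hr two_ne_zero

theorem norm_one_sub_mul_conj_le {z : ℂ} (hz : ‖z‖ ≤ 1) : ‖1 - z * conj z‖ ≤ 1 := by
  have hz₁ : 0 ≤ 1 - ‖z‖ ^ 2 := sub_nonneg.2 (pow_le_one₀ (norm_nonneg z) hz)
  have hdefect : 1 - z * conj z = ((1 - ‖z‖ ^ 2 : ℝ) : ℂ) := by simp [Complex.mul_conj']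
  rw [hdefect, Complex.norm_of_nonneg hz₁]
  exact sub_le_self 1 (sq_nonneg _)

/-- The families `v` of values in the closed unit disk for which the Pick matrix
`1 - v i * conj (v j)` is the sum of two positive semidefinite matrices, multiplied entrywise by
the reciprocals of the Szegő kernels in the variables other than `q` and other than `p`. -/
def splitPickValues (lam : n → ι → ℂ) (p q : ι) : Set (n → ℂ) :=
  {v | (∀ i, ‖v i‖ ≤ 1) ∧ ∃ Γp Γq : Matrix n n ℂ, Γp.PosSemidef ∧ Γq.PosSemidef ∧
    ∀ i j, 1 - v i * conj (v j) =
      szegoDenominator lam q i j * Γq i j + szegoDenominator lam p i j * Γp i j}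

theorem isClosed_splitPickValues {lam : n → ι → ℂ} (hlam : ∀ i, lam i ∈ Metric.ball 0 1)
    (p q : ι) : IsClosed (splitPickValues lam p q) := by
  let pick (v : n → ℂ) : Matrix n n ℂ := of fun i j ↦ 1 - v i * conj (v j)
  have hpick : Continuous pick := continuous_pi fun i ↦ continuous_pi fun j ↦ by
    simp only [pick, of_apply]
    fun_prop
  have hdisk : IsClosed {v : n → ℂ | ∀ i, ‖v i‖ ≤ 1} :=
    Set.ofPred_forall _ ▸ isClosed_iInter fun i ↦ isClosed_le (by fun_prop) continuous_const
  convert hdisk.inter ((isClosed_setOf_hadamard_add_hadamard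
    (fun i ↦ szegoDenominator_diag_pos (hlam i) q)
    (fun i ↦ szegoDenominator_diag_pos (hlam i) p) 1).preimage hpick)
  refine Set.ext fun v ↦ and_congr_right fun hv ↦ ⟨?_, ?_⟩
  · rintro ⟨Γp, Γq, hΓp, hΓq, h⟩
    exact ⟨fun i ↦ norm_one_sub_mul_conj_le (hv i), Γq, Γp, hΓq, hΓp,
      ext fun i j ↦ (h i j).symm⟩
  · rintro ⟨-, Γq, Γp, hΓq, hΓp, h⟩
    exact ⟨Γp, Γq, hΓp, hΓq, fun i j ↦ (congr_fun₂ h i j).symm⟩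

theorem schurPolynomialValues_subset {lam : n → ι → ℂ} (hlam : ∀ i, lam i ∈ Metric.ball 0 1)
    {p q : ι} (hpq : p ≠ q) : schurPolynomialValues lam ⊆ splitPickValues lam p q := by
  rintro v ⟨f, hf, hv⟩
  obtain rfl : v = fun i ↦ f.eval (lam i) := funext hv
  exact ⟨fun i ↦ (hf _ (mem_ball_zero_iff.1 (hlam i)).le).le, exists_posSemidef_of_polynomial hpq hf
    fun i r ↦ (norm_le_pi_norm _ r).trans_lt (mem_ball_zero_iff.1 (hlam i))⟩

end Kernels

end GKVW

open GKVW in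
theorem gkvw_necessary_condition_general {ι n : Type*} [Fintype ι] [DecidableEq ι]
    {lam : n → ι → ℂ} (hlam : ∀ i, lam i ∈ Metric.ball 0 1) {φ : (ι → ℂ) → ℂ}
    (hφ : DifferentiableOn ℂ φ (Metric.ball 0 1)) (hφ₁ : ∀ z ∈ Metric.ball 0 1, ‖φ z‖ ≤ 1)
    {p q : ι} (hpq : p ≠ q) :
    ∃ Γp Γq : Matrix n n ℂ, Γp.PosSemidef ∧ Γq.PosSemidef ∧
      ∀ i j, 1 - φ (lam i) * starRingEnd ℂ (φ (lam j)) =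
        (∏ r ∈ univ.erase q, (1 - lam i r * starRingEnd ℂ (lam j r))) * Γq i j +
        (∏ r ∈ univ.erase p, (1 - lam i r * starRingEnd ℂ (lam j r))) * Γp i j :=
  (closure_minimal (schurPolynomialValues_subset hlam hpq) (isClosed_splitPickValues hlam p q)
    (mem_closure_schurPolynomialValues hφ hφ₁ hlam)).2

/-- **Grinshpan–Kaliuzhnyi-Verbovetskyi–Vinnikov–Woerdeman necessary condition for Pick
interpolation on the polydisk.** If there is an analytic `φ : 𝔻^d → ℂ` with
`sup_{𝔻^d}|φ| ≤ 1` and `φ(λᵢ) = wᵢ`, then for every `1 ≤ p < q ≤ d` there are positive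
semi-definite `N × N` matrices `Γ^p, Γ^q` with
`1 - wᵢw̄ⱼ = ∏_{r ≠ q}(1 - λᵢʳλ̄ⱼʳ) Γ^qᵢⱼ + ∏_{r ≠ p}(1 - λᵢʳλ̄ⱼʳ) Γ^pᵢⱼ` for all `i, j`. -/
theorem gkvw_necessary_condition {d N : ℕ} (lam : Fin N → Fin d → ℂ) (w : Fin N → ℂ)
    (hlam : ∀ i, lam i ∈ Polydisk d)
    (hφ : ∃ φ : (Fin d → ℂ) → ℂ, DifferentiableOn ℂ φ (Polydisk d) ∧
      (∀ z ∈ Polydisk d, ‖φ z‖ ≤ 1) ∧ ∀ i, φ (lam i) = w i) :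
    ∀ p q : Fin d, p < q →
      ∃ Γp Γq : Matrix (Fin N) (Fin N) ℂ, Γp.PosSemidef ∧ Γq.PosSemidef ∧
        ∀ i j, 1 - w i * starRingEnd ℂ (w j) =
          (∏ r ∈ Finset.univ.erase q, (1 - lam i r * starRingEnd ℂ (lam j r))) * Γq i j +
          (∏ r ∈ Finset.univ.erase p, (1 - lam i r * starRingEnd ℂ (lam j r))) * Γp i j := by
  intro p q hpq
  obtain ⟨φ, hφ, hφ₁, hw⟩ := hφ
  have hball : Polydisk d = Metric.ball 0 1 :=
    Set.ext fun z ↦ (mem_ball_zero_iff.trans (pi_norm_lt_iff one_pos)).symm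
  simp only [hball] at hφ hφ₁ hlam
  simpa only [hw] using gkvw_necessary_condition_general hlam hφ hφ₁ hpq.ne
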